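/- For a tree G, the minimum over all adjacent 1-common edge-colorings f of G of the maximum color max{f(uv) : uv ∈ E(G)} equals max{deg_G(u) + deg_G(v) − 1 : uv ∈ E(G)}. -/

import Mathlib

/-!
An adjacent 1-common edge-coloring of a graph is the same as a positive strong edge-coloring:
since `f(uv) ∈ C(u) ∩ C(v)` always holds, the condition `|C(u) ∩ C(v)| = 1` says that an edge at `u`
and an edge at `v` sharing a color are both `uv`.

*Lower bound.* For an edge `uv` we have `|C(u) ∪ C(v)| = deg u + deg v - 1`, and all these colors
lie in `{1, …, M}` (`degree_add_degree_le`).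

*Upper bound.* Root the tree at `r` and color the edges greedily in order of distance from `r`
(`exists_greedy_coloring`). When the edge `xw` with `x` the parent of `w` gets its turn, each
conflicting edge not lying farther from `r` is incident with `x` or with the parent `p` of `x`
(`exists_small_conflict_set`). Apart from `xw` there are at most `deg x + deg p - 2` of those,
so one of the `max (deg u + deg v - 1)` colors is free.
-/


/-- The set of colors appearing on edges incident with `x` under the edge coloring `f`. -/
def edgeColorSet {V : Type*} [Fintype V] [DecidableEq V]
    (G : SimpleGraph V) [DecidableRel G.Adj] (f : Sym2 V → ℕ) (x : V) : Finset ℕ :=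
  (G.neighborFinset x).image (fun y => f s(x, y))

/-- An adjacent 1-common edge-coloring: a proper edge coloring with positive colors
such that for each edge `uv`, `|C(u) ∩ C(v)| = 1`, and for adjacent edges `uv`, `uw`,
`C(u) ∩ C(v) ≠ C(u) ∩ C(w)`. -/
def IsAdjacentOneCommonEdgeColoring {V : Type*} [Fintype V] [DecidableEq V]
    (G : SimpleGraph V) [DecidableRel G.Adj] (f : Sym2 V → ℕ) : Prop :=
  (∀ u v : V, G.Adj u v → 1 ≤ f s(u, v)) ∧
  (∀ u v w : V, G.Adj u v → G.Adj u w → v ≠ w → f s(u, v) ≠ f s(u, w)) ∧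
  (∀ u v : V, G.Adj u v → (edgeColorSet G f u ∩ edgeColorSet G f v).card = 1) ∧
  (∀ u v w : V, G.Adj u v → G.Adj u w → v ≠ w →
    edgeColorSet G f u ∩ edgeColorSet G f v ≠ edgeColorSet G f u ∩ edgeColorSet G f w)

namespace TreeOneCommon

/-- Greedy coloring along a rank function: if every element has fewer than `M` conflicts with
elements of no larger rank, then `M` colors suffice. -/
lemma exists_greedy_coloring {α : Type*} [DecidableEq α] (s : Finset α) (ρ : α → ℕ)
    (R : α → α → Prop) (hR : ∀ a b, R a b → R b a) (M : ℕ)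
    (h : ∀ a ∈ s, ∃ B : Finset α, B.card < M ∧
      ∀ b ∈ s, b ≠ a → ρ b ≤ ρ a → R a b → b ∈ B) :
    ∃ c : α → ℕ, (∀ a ∈ s, 1 ≤ c a ∧ c a ≤ M) ∧
      ∀ a ∈ s, ∀ b ∈ s, a ≠ b → R a b → c a ≠ c b := by
  induction s using Finset.induction_on_max_value ρ with
  | empty => exact ⟨fun _ => 0, by simp, by simp⟩
  | insert a s has hmax ih =>
    obtain ⟨c, hc1, hc2⟩ := ih fun b hb => by
      obtain ⟨B, hB1, hB2⟩ := h b (Finset.mem_insert_of_mem hb)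
      exact ⟨B, hB1, fun b' hb' => hB2 b' (Finset.mem_insert_of_mem hb')⟩
    obtain ⟨B, hB1, hB2⟩ := h a (Finset.mem_insert_self a s)
    have hlt : (B.image c).card < (Finset.Icc 1 M).card := by
      simpa using Finset.card_image_le.trans_lt hB1
    obtain ⟨k, hk, hkB⟩ := Finset.exists_mem_notMem_of_card_lt_card hlt
    rw [Finset.mem_Icc] at hk
    have key : ∀ b ∈ s, R a b → k ≠ c b := fun b hb hab hkb =>
      hkB (Finset.mem_image.2 ⟨b, hB2 b (Finset.mem_insert_of_mem hb)
        (fun e => has (e ▸ hb)) (hmax b hb) hab, hkb.symm⟩)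
    have hne : ∀ b ∈ s, b ≠ a := fun b hb e => has (e ▸ hb)
    refine ⟨Function.update c a k, ?_, ?_⟩
    · intro b hb
      rcases Finset.mem_insert.1 hb with rfl | hb
      · simpa using hk
      · simpa [hne b hb] using hc1 b hb
    · intro b hb b' hb' hbb' hRb
      rw [Finset.mem_insert] at hb hb'
      rcases hb with rfl | hb <;> rcases hb' with rfl | hb'
      · exact absurd rfl hbb'
      · simpa [hne b' hb'] using key b' hb' hRb
      · simpa [hne b hb] using (key b hb (hR _ _ hRb)).symm
      · simpa [hne b hb, hne b' hb'] using hc2 b hb b' hb' hbb' hRb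

variable {V : Type*}

/-- In a rooted tree the parent of a vertex is unique. -/
lemma parent_unique {G : SimpleGraph V} (hT : G.IsTree) (r : V) {w x y : V}
    (hx : G.Adj x w) (hy : G.Adj y w) (hdx : G.dist r w = G.dist r x + 1)
    (hdy : G.dist r w = G.dist r y + 1) : x = y := by
  obtain ⟨p, hp⟩ := hT.connected.exists_walk_length_eq_dist r x
  obtain ⟨q, hq⟩ := hT.connected.exists_walk_length_eq_dist r y
  have hp' : (p.concat hx).IsPath :=
    SimpleGraph.Walk.isPath_of_length_eq_dist _ (by simp [hp, hdx])
  have hq' : (q.concat hy).IsPath :=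
    SimpleGraph.Walk.isPath_of_length_eq_dist _ (by simp [hq, hdy])
  have h : p.concat hx = q.concat hy :=
    congrArg Subtype.val ((hT.isAcyclic.subsingleton_path r w).elim ⟨_, hp'⟩ ⟨_, hq'⟩)
  simpa using congrArg SimpleGraph.Walk.penultimate h

/-- Two edges conflict when they share a vertex or are joined by an edge. -/
def Conflict (G : SimpleGraph V) (e e' : Sym2 V) : Prop :=
  ∃ a ∈ e, ∃ b ∈ e', a = b ∨ G.Adj a b

lemma Conflict.symm {G : SimpleGraph V} {e e' : Sym2 V} (h : Conflict G e e') :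
    Conflict G e' e := by
  obtain ⟨a, ha, b, hb, h⟩ := h
  exact ⟨b, hb, a, ha, h.imp Eq.symm SimpleGraph.Adj.symm⟩

/-- The sum of the distances from `r` to the two ends of an edge. In a tree this is `2 d + 1`, with
`d` the distance to the nearer end, so it orders the edges by their level. -/
noncomputable def level (G : SimpleGraph V) (r : V) : Sym2 V → ℕ :=
  Sym2.lift ⟨fun a b => G.dist r a + G.dist r b, fun _ _ => Nat.add_comm _ _⟩

/-- An edge of no larger level in conflict with the edge `xw`, where `x` is the parent of `w`,
is incident with `x` or with the parent of `x`. -/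
lemma mem_or_parent_mem {G : SimpleGraph V} (hT : G.IsTree) (r : V) {x w : V}
    (hxw : G.Adj x w) (hd : G.dist r w = G.dist r x + 1) {e : Sym2 V} (he : e ∈ G.edgeSet)
    (hl : level G r e ≤ level G r s(x, w)) (hc : Conflict G s(x, w) e) :
    x ∈ e ∨ ∃ p ∈ e, G.Adj p x ∧ G.dist r x = G.dist r p + 1 := by
  obtain ⟨a, ha, b, hb, hab⟩ := hc
  obtain ⟨y, rfl⟩ := Sym2.mem_iff_exists.1 hb
  rw [SimpleGraph.mem_edgeSet] at he
  have hby := hT.dist_eq_dist_add_one_of_adj r he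
  simp only [level, Sym2.lift_mk] at hl
  rcases Sym2.mem_iff.1 ha with rfl | rfl
  · rcases hab with rfl | hab
    · exact Or.inl hb
    · rcases hT.dist_eq_dist_add_one_of_adj r hab with h | h
      · exact Or.inr ⟨b, hb, hab.symm, h⟩
      · -- `b` is a child of `x`, so the level bound makes `y` its parent
        left
        have : a = y := parent_unique hT r hab he.symm h (by omega)
        simp [this]
  · rcases hab with rfl | hab
    · left
      have : x = y := parent_unique hT r hxw he.symm hd (by omega)
      simp [this]
    · rcases hT.dist_eq_dist_add_one_of_adj r hab with h | h
      · left
        have : x = b := parent_unique hT r hxw hab.symm hd h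
        simp [this]
      · omega

variable [Fintype V] [DecidableEq V]

lemma card_incidence_union_lt (G : SimpleGraph V) [DecidableRel G.Adj] {x p : V}
    (h : G.Adj p x) :
    (G.incidenceFinset p ∪ G.incidenceFinset x).card + 1 ≤ G.degree p + G.degree x := by
  have h1 := Finset.card_union_add_card_inter (G.incidenceFinset p) (G.incidenceFinset x)
  have h2 : 0 < (G.incidenceFinset p ∩ G.incidenceFinset x).card :=
    Finset.card_pos.2 ⟨s(p, x), by simp [SimpleGraph.mk'_mem_incidenceSet_iff, h]⟩
  rw [SimpleGraph.card_incidenceFinset_eq_degree, SimpleGraph.card_incidenceFinset_eq_degree] at h1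
  omega

/-- If `deg u + deg v - 1 ≤ M` on all edges of the tree, then an edge has fewer than `M` conflicts
with edges of no larger level. -/
lemma exists_small_conflict_set (G : SimpleGraph V) [DecidableRel G.Adj] (hT : G.IsTree) (r : V)
    (M : ℕ) (hM : ∀ u v, G.Adj u v → G.degree u + G.degree v ≤ M + 1)
    (e : Sym2 V) (he : e ∈ G.edgeFinset) :
    ∃ B : Finset (Sym2 V), B.card < M ∧ ∀ e' ∈ G.edgeFinset, e' ≠ e →
      level G r e' ≤ level G r e → Conflict G e e' → e' ∈ B := by
  obtain ⟨x, w, rfl, hxw, hd⟩ : ∃ x w, e = s(x, w) ∧ G.Adj x w ∧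
      G.dist r w = G.dist r x + 1 := by
    induction e using Sym2.ind with
    | _ a b =>
      rw [SimpleGraph.mem_edgeFinset, SimpleGraph.mem_edgeSet] at he
      rcases hT.dist_eq_dist_add_one_of_adj r he with h | h
      · exact ⟨b, a, Sym2.eq_swap, he.symm, h⟩
      · exact ⟨a, b, rfl, he, h⟩
  have hmem : s(x, w) ∈ G.incidenceFinset x := by simpa using hxw
  by_cases hp : ∃ p, G.Adj p x ∧ G.dist r x = G.dist r p + 1
  · obtain ⟨p, hpx, hdp⟩ := hp
    refine ⟨(G.incidenceFinset p ∪ G.incidenceFinset x).erase s(x, w), ?_, ?_⟩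
    · have h1 := Finset.card_erase_add_one
        (Finset.mem_union_right (G.incidenceFinset p) hmem)
      have h2 := card_incidence_union_lt G hpx
      have h3 := hM p x hpx
      omega
    · intro e' he' hne hl hc
      rw [SimpleGraph.mem_edgeFinset] at he'
      refine Finset.mem_erase.2 ⟨hne, Finset.mem_union.2 ?_⟩
      simp only [SimpleGraph.mem_incidenceFinset]
      rcases mem_or_parent_mem hT r hxw hd he' hl hc with h | ⟨q, hq, hqx, hdq⟩
      · exact Or.inr ⟨he', h⟩
      · exact Or.inl ⟨he', parent_unique hT r hpx hqx hdp hdq ▸ hq⟩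
  · -- here `x` is the root
    refine ⟨(G.incidenceFinset x).erase s(x, w), ?_, ?_⟩
    · have h1 := Finset.card_erase_add_one hmem
      rw [SimpleGraph.card_incidenceFinset_eq_degree] at h1
      have h2 := hM x w hxw
      have h3 : 0 < G.degree w := (G.degree_pos_iff_exists_adj w).2 ⟨x, hxw.symm⟩
      omega
    · intro e' he' hne hl hc
      rw [SimpleGraph.mem_edgeFinset] at he'
      refine Finset.mem_erase.2 ⟨hne, ?_⟩
      rw [SimpleGraph.mem_incidenceFinset]
      rcases mem_or_parent_mem hT r hxw hd he' hl hc with h | ⟨q, -, hq⟩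
      · exact ⟨he', h⟩
      · exact absurd ⟨q, hq⟩ hp

/-- A positive strong edge-coloring is an adjacent 1-common edge-coloring. -/
lemma isAdjacentOneCommon_of_strong (G : SimpleGraph V) [DecidableRel G.Adj] (f : Sym2 V → ℕ)
    (hpos : ∀ e ∈ G.edgeFinset, 1 ≤ f e)
    (hf : ∀ e ∈ G.edgeFinset, ∀ e' ∈ G.edgeFinset, e ≠ e' → Conflict G e e' → f e ≠ f e') :
    IsAdjacentOneCommonEdgeColoring G f := by
  have hproper : ∀ u v w : V, G.Adj u v → G.Adj u w → v ≠ w → f s(u, v) ≠ f s(u, w) := by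
    intro u v w huv huw hvw
    refine hf _ (by simpa using huv) _ (by simpa using huw) (fun h => hvw (Sym2.congr_right.1 h))
      ⟨u, by simp, u, by simp, Or.inl rfl⟩
  have hinter : ∀ u v : V, G.Adj u v →
      edgeColorSet G f u ∩ edgeColorSet G f v = {f s(u, v)} := by
    intro u v huv
    ext k
    simp only [edgeColorSet, Finset.mem_inter, Finset.mem_image, SimpleGraph.mem_neighborFinset,
      Finset.mem_singleton]
    constructor
    · rintro ⟨⟨y, huy, rfl⟩, ⟨z, hvz, hz⟩⟩
      by_contra hne
      have hyz : s(u, y) = s(v, z) := by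
        by_contra h
        exact hf s(u, y) (by simpa using huy) s(v, z) (by simpa using hvz) h
          ⟨u, by simp, v, by simp, Or.inr huv⟩ hz.symm
      have : v = y := by
        have hv : v ∈ s(u, y) := by simp [hyz]
        exact (Sym2.mem_iff.1 hv).resolve_left huv.ne'
      exact hne (by rw [this])
    · rintro rfl
      exact ⟨⟨v, huv, rfl⟩, ⟨u, huv.symm, by rw [Sym2.eq_swap]⟩⟩
  refine ⟨fun u v huv => hpos _ (by simpa using huv), hproper, fun u v huv => ?_,
    fun u v w huv huw hvw => ?_⟩
  · rw [hinter u v huv, Finset.card_singleton]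
  · rw [hinter u v huv, hinter u w huw]
    exact fun h => hproper u v w huv huw hvw (Finset.singleton_injective h)

lemma degree_add_degree_le (G : SimpleGraph V) [DecidableRel G.Adj] (f : Sym2 V → ℕ) (M : ℕ)
    (hf : IsAdjacentOneCommonEdgeColoring G f) (hM : ∀ u v : V, G.Adj u v → f s(u, v) ≤ M)
    {u v : V} (huv : G.Adj u v) : G.degree u + G.degree v - 1 ≤ M := by
  obtain ⟨hpos, hproper, hone, -⟩ := hf
  have hcard : ∀ x, (edgeColorSet G f x).card = G.degree x := by
    intro x
    rw [edgeColorSet, Finset.card_image_of_injOn, SimpleGraph.card_neighborFinset_eq_degree]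
    intro y hy z hz hyz
    by_contra hne
    exact hproper x y z (by simpa using hy) (by simpa using hz) hne hyz
  have hsub : ∀ x, edgeColorSet G f x ⊆ Finset.Icc 1 M := by
    intro x k hk
    obtain ⟨y, hy, rfl⟩ := Finset.mem_image.1 hk
    rw [SimpleGraph.mem_neighborFinset] at hy
    exact Finset.mem_Icc.2 ⟨hpos x y hy, hM x y hy⟩
  have h1 := Finset.card_union_add_card_inter (edgeColorSet G f u) (edgeColorSet G f v)
  have h2 := Finset.card_le_card (Finset.union_subset (hsub u) (hsub v))
  rw [hone u v huv, hcard, hcard] at h1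
  rw [Nat.card_Icc] at h2
  omega

end TreeOneCommon

open TreeOneCommon in
/-- For a tree `G` with at least one edge,
`χ′_set(G) = min_f max{f(uv) : uv ∈ E(G)}` over all adjacent 1-common edge-colorings
equals `max{deg(u) + deg(v) − 1 : uv ∈ E(G)}`. -/
theorem chi_set_of_tree
    {V : Type*} [Fintype V] [DecidableEq V]
    (G : SimpleGraph V) [DecidableRel G.Adj] (hT : G.IsTree)
    (hE : G.edgeFinset.Nonempty) :
    sInf {M : ℕ | ∃ f : Sym2 V → ℕ, IsAdjacentOneCommonEdgeColoring G f ∧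
        ∀ u v : V, G.Adj u v → f s(u, v) ≤ M}
      = sSup {d : ℕ | ∃ u v : V, G.Adj u v ∧ d = G.degree u + G.degree v - 1} := by
  set D : Set ℕ := {d : ℕ | ∃ u v : V, G.Adj u v ∧ d = G.degree u + G.degree v - 1} with hD
  have hne : D.Nonempty := by
    obtain ⟨e, he⟩ := hE
    induction e using Sym2.ind with
    | _ a b => exact ⟨_, a, b, by simpa using he, rfl⟩
  have hbdd : BddAbove D := by
    refine ⟨Fintype.card V + Fintype.card V, ?_⟩
    rintro _ ⟨u, v, -, rfl⟩
    have := G.degree_lt_card_verts u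
    have := G.degree_lt_card_verts v
    omega
  refine IsLeast.csInf_eq ⟨?_, ?_⟩
  · obtain ⟨r⟩ := hT.connected.nonempty
    have hM : ∀ u v, G.Adj u v → G.degree u + G.degree v ≤ sSup D + 1 := by
      intro u v huv
      have := le_csSup hbdd (show _ ∈ D from ⟨u, v, huv, rfl⟩)
      omega
    obtain ⟨c, hc1, hc2⟩ := exists_greedy_coloring G.edgeFinset (level G r) (Conflict G)
      (fun _ _ h => h.symm) (sSup D) (exists_small_conflict_set G hT r (sSup D) hM)
    exact ⟨c, isAdjacentOneCommon_of_strong G c (fun e he => (hc1 e he).1) hc2,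
      fun u v huv => (hc1 _ (by simpa using huv)).2⟩
  · rintro M ⟨f, hf, hfM⟩
    refine csSup_le hne ?_
    rintro _ ⟨u, v, huv, rfl⟩
    exact degree_add_degree_le G f M hf hfM huv
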